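/- (Code construction / coding theorem) For all λ, τ ∈ (0,1) there exist δ > 0 and a constant K (depending only on λ, τ, a and d) such that: for every classical–quantum channel W from a finite alphabet X with |X| = a into the density operators on ℂ^d, every probability distribution P on X, every positive integer n, and every subset A ⊆ X^n with P^{⊗n}(A) ≥ τ, there exists an (n,λ)-code (f,D) with f(m) ∈ A and Tr D_m ≤ Tr Π^n_{W,δ}(f(m)) for all m ∈ M, and |M| ≥ exp₂(n·I(P;W) − K·√n). -/

import Mathlib

open Matrix BigOperators Finset
open scoped Classical ComplexOrder

noncomputable section

/-- Square complex matrices of size `d` (operators on `ℂ^d`). -/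
abbrev Mat (d : ℕ) := Matrix (Fin d) (Fin d) ℂ

/-- Operators on the `n`-fold tensor power `(ℂ^d)^{⊗n}`, indexed by `Fin n → Fin d`. -/
abbrev MatPow (d n : ℕ) := Matrix (Fin n → Fin d) (Fin n → Fin d) ℂ

/-- Tensor product `A 0 ⊗ A 1 ⊗ ⋯ ⊗ A (n-1)` of a family of `d × d` matrices. -/
def tensorPow {d n : ℕ} (A : Fin n → Mat d) : MatPow d n :=
  Matrix.of fun j k => ∏ i, A i (j i) (k i)

/-- Exponential to base 2. -/
def exp2 (t : ℝ) : ℝ := (2 : ℝ) ^ t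

/-- `P` is a probability distribution on the finite set `X`. -/
def IsProbDist {X : Type*} [Fintype X] (P : X → ℝ) : Prop :=
  (∀ x, 0 ≤ P x) ∧ ∑ x, P x = 1

/-- `ρ` is a density operator (a state): positive semidefinite with trace one. -/
def IsState {ι : Type*} [Fintype ι] [DecidableEq ι] (ρ : Matrix ι ι ℂ) : Prop :=
  ρ.PosSemidef ∧ ρ.trace = 1

/-- `N(x|x^n)`: number of occurrences of the letter `x` in the sequence `xs`. -/
def countIn {X : Type*} {n : ℕ} (x : X) (xs : Fin n → X) : ℕ :=
  (Finset.univ.filter fun i => xs i = x).card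

/-- The variance-typical set `T^n_{P,δ}`. -/
def typicalSet {X : Type*} [Fintype X] (n : ℕ) (P : X → ℝ) (δ : ℝ) :
    Finset (Fin n → X) :=
  Finset.univ.filter fun xs => ∀ x : X,
    |(countIn x xs : ℝ) - n * P x| ≤ δ * Real.sqrt n * Real.sqrt (P x * (1 - P x))

/-- Product (i.i.d.) probability `P^{⊗n}(A)` of a set `A` of sequences. -/
def prodProb {X : Type*} [Fintype X] {n : ℕ} (P : X → ℝ) (A : Finset (Fin n → X)) : ℝ :=
  ∑ xs ∈ A, ∏ i, P (xs i)

/-- Shannon entropy to base 2. -/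
def shannonEntropy {X : Type*} [Fintype X] (P : X → ℝ) : ℝ :=
  -∑ x, P x * Real.logb 2 (P x)

/-- von Neumann entropy to base 2, `H(ρ) = -Tr(ρ log₂ ρ)`, via the eigenvalues. -/
def vnEntropy {d : ℕ} (ρ : Mat d) : ℝ :=
  if h : ρ.IsHermitian then -∑ i, h.eigenvalues i * Real.logb 2 (h.eigenvalues i) else 0

/-- The constant `K = 2 log₂(e) / e`. -/
def Kconst : ℝ := 2 * Real.logb 2 (Real.exp 1) / Real.exp 1

/-- A diagonalization `ρ = Σ_j R j • π j` into one-dimensional mutually orthogonal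
eigenprojectors, with eigenvalue list `R` a probability distribution. -/
def IsDiagonalization {d : ℕ} (ρ : Mat d) (R : Fin d → ℝ) (π : Fin d → Mat d) : Prop :=
  (∀ j, (π j).PosSemidef) ∧ (∀ j, π j * π j = π j) ∧ (∀ j, (π j).trace = 1) ∧
    (∀ j k, j ≠ k → π j * π k = 0) ∧ (∑ j, π j = 1) ∧
    ρ = ∑ j, (R j : ℂ) • π j ∧ IsProbDist R

/-- The variance-typical projector `Π^n_{ρ,δ}` of a state with fixed diagonalization
`(R, π)`. -/
def typicalProj {d : ℕ} (n : ℕ) (R : Fin d → ℝ) (π : Fin d → Mat d) (δ : ℝ) : MatPow d n :=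
  ∑ js ∈ typicalSet n R δ, tensorPow fun i => π (js i)

/-- `B` is an `η`-shadow of the state `σ`: `0 ≤ B ≤ 1` and `Tr(σB) ≥ η`. -/
def IsShadow {ι : Type*} [Fintype ι] [DecidableEq ι] (σ B : Matrix ι ι ℂ) (η : ℝ) : Prop :=
  B.PosSemidef ∧ ((1 : Matrix ι ι ℂ) - B).PosSemidef ∧ η ≤ (Matrix.trace (σ * B)).re

/-- Average state `PW = Σ_x P(x) W_x` of a cq-channel under input distribution `P`. -/
def avgState {X : Type*} [Fintype X] {d : ℕ} (P : X → ℝ) (W : X → Mat d) : Mat d :=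
  ∑ x, (P x : ℂ) • W x

/-- Conditional von Neumann entropy `H(W|P) = Σ_x P(x) H(W_x)`. -/
def condEntropy {X : Type*} [Fintype X] {d : ℕ} (P : X → ℝ) (W : X → Mat d) : ℝ :=
  ∑ x, P x * vnEntropy (W x)

/-- Mutual information `I(P;W) = H(PW) − H(W|P)`. -/
def mutualInfo {X : Type*} [Fintype X] {d : ℕ} (P : X → ℝ) (W : X → Mat d) : ℝ :=
  vnEntropy (avgState P W) - condEntropy P W

/-- Capacity `C(W) = max_P I(P;W)`. -/
def capacity {X : Type*} [Fintype X] {d : ℕ} (W : X → Mat d) : ℝ :=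
  sSup {c | ∃ P : X → ℝ, IsProbDist P ∧ c = mutualInfo P W}

/-- `(f, D)` (with message set `M` inside the outcome index set `M'`) is an
`(n,λ)`-code for the cq-channel `W`: the `D m` are positive semidefinite, sum to the
identity, and each message is decoded correctly with probability at least `1 - λ`. -/
def IsCode {X : Type*} [Fintype X] {d n : ℕ} (W : X → Mat d) (lam : ℝ)
    {M' : Type*} [Fintype M'] (M : Finset M') (f : M' → Fin n → X)
    (D : M' → MatPow d n) : Prop :=
  (∀ m, (D m).PosSemidef) ∧ (∑ m, D m = 1) ∧
    ∀ m ∈ M, 1 - lam ≤ (Matrix.trace (tensorPow (fun i => W (f m i)) * D m)).re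

/-- `N(n,λ)`: maximal size of an `(n,λ)`-code for `W`. -/
def maxCodeSize {X : Type*} [Fintype X] (d : ℕ) (W : X → Mat d) (n : ℕ) (lam : ℝ) : ℕ :=
  sSup {k | ∃ (M' : Type) (_ : Fintype M') (M : Finset M') (f : M' → Fin n → X)
    (D : M' → MatPow d n), IsCode W lam M f D ∧ M.card = k}

/-- Trace norm `‖A‖₁ = Tr|A|`: the sum of the singular values. -/
def traceNorm {ι : Type*} [Fintype ι] [DecidableEq ι] (A : Matrix ι ι ℂ) : ℝ :=
  ∑ i, Real.sqrt ((Matrix.posSemidef_conjTranspose_mul_self A).1.eigenvalues i)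

/-- Trace distance `D(ρ,σ) = ½‖ρ−σ‖₁`. -/
def traceDist {ι : Type*} [Fintype ι] [DecidableEq ι] (ρ σ : Matrix ι ι ℂ) : ℝ :=
  traceNorm (ρ - σ) / 2

/-- (Pure-state) fidelity `F(ρ,σ) = Tr(ρσ)`. -/
def fidelity {ι : Type*} [Fintype ι] [DecidableEq ι] (ρ σ : Matrix ι ι ℂ) : ℝ :=
  (Matrix.trace (ρ * σ)).re

/-- A pure state: the rank-one orthogonal projector `|ψ⟩⟨ψ|` onto the span of a
unit vector `ψ`. -/
def IsPureState {ι : Type*} [Fintype ι] (ρ : Matrix ι ι ℂ) : Prop :=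
  ∃ ψ : ι → ℂ, (∑ i, star (ψ i) * ψ i) = 1 ∧ ρ = Matrix.vecMulVec ψ (star ψ)

/-- The set of eigenvalue-index sequences `js` that are variance-typical, with
constant `δ`, for the distribution `q x` on each block `I_x = {i : xs i = x}`. -/
def condTypicalSet {X : Type*} [Fintype X] {n d : ℕ} (xs : Fin n → X)
    (q : X → Fin d → ℝ) (δ : ℝ) : Finset (Fin n → Fin d) :=
  Finset.univ.filter fun js => ∀ (x : X) (k : Fin d),
    |((Finset.univ.filter fun i => xs i = x ∧ js i = k).card : ℝ) - (countIn x xs : ℝ) * q x k|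
      ≤ δ * Real.sqrt (countIn x xs) * Real.sqrt (q x k * (1 - q x k))

/-- Conditional variance-typical projector `Π^n_{W,δ}(x^n) = ⊗_{x∈X} Π^{I_x}_{W_x,δ}`,
with respect to fixed diagonalizations `W_x = Σ_j (q x j) • (π x j)`. -/
def condTypicalProj {X : Type*} [Fintype X] {d : ℕ} {n : ℕ} (xs : Fin n → X)
    (q : X → Fin d → ℝ) (π : X → Fin d → Mat d) (δ : ℝ) : MatPow d n :=
  ∑ js ∈ condTypicalSet xs q δ, tensorPow fun i => π (xs i) (js i)

/-! ### Matrix helpers -/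

section MatrixHelpers

variable {ι : Type*} [Fintype ι] [DecidableEq ι]

/-- The trace of a product of positive semidefinite matrices is nonnegative. -/
lemma trace_mul_re_nonneg {A B : Matrix ι ι ℂ} (hA : A.PosSemidef) (hB : B.PosSemidef) :
    0 ≤ (Matrix.trace (A * B)).re := by
  obtain ⟨C, rfl⟩ : ∃ C : Matrix ι ι ℂ, A = Cᴴ * C := by
    open MatrixOrder in
    exact (CStarAlgebra.nonneg_iff_eq_star_mul_self (a := A)).1 hA.nonneg
  rw [Matrix.mul_assoc, Matrix.trace_mul_comm]
  have h := (hB.mul_mul_conjTranspose_same C).trace_nonneg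
  exact (Complex.le_def.1 h).1

lemma trace_mul_re_mono {A B C : Matrix ι ι ℂ} (hA : A.PosSemidef) (hB : (C - B).PosSemidef) :
    (Matrix.trace (A * B)).re ≤ (Matrix.trace (A * C)).re := by
  have h := trace_mul_re_nonneg hA hB
  rw [Matrix.mul_sub, Matrix.trace_sub, Complex.sub_re] at h
  linarith

lemma posSemidef_sandwich {A B : Matrix ι ι ℂ} (hA : A.IsHermitian) (hB : B.PosSemidef) :
    (A * B * A).PosSemidef := by
  have h := hB.mul_mul_conjTranspose_same A
  rwa [hA.eq] at h

lemma posSemidef_sub_sq {B : Matrix ι ι ℂ} (hB : B.PosSemidef) (hB1 : (1 - B).PosSemidef) :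
    (B - B * B).PosSemidef := by
  have h : B - B * B = B * (1 - B) * B + (1 - B) * B * (1 - B) := by noncomm_ring
  rw [h]
  exact (posSemidef_sandwich hB.1 hB1).add (posSemidef_sandwich hB1.1 hB)

lemma posSemidef_of_proj {Q : Matrix ι ι ℂ} (hQ : Q.IsHermitian) (hQ2 : Q * Q = Q) :
    Q.PosSemidef := by
  have h := Matrix.posSemidef_conjTranspose_mul_self Q
  rwa [hQ.eq, hQ2] at h

/-- The decoding operator obtained by cutting a projector `Q` down below `1 - B`. -/
lemma cut_down {W B Q : Matrix ι ι ℂ} {η c ε : ℝ} (hW : W.PosSemidef) (hWt : W.trace = 1)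
    (hB : B.PosSemidef) (hB1 : (1 - B).PosSemidef)
    (hQ : Q.IsHermitian) (hQ2 : Q * Q = Q) (hc : 0 < c)
    (hWQ : 1 - ε ≤ (Matrix.trace (W * Q)).re) (hWB : (Matrix.trace (W * B)).re ≤ η) :
    ∃ D : Matrix ι ι ℂ, D.PosSemidef ∧ (1 - B - D).PosSemidef ∧
      (Matrix.trace D).re ≤ (Matrix.trace Q).re ∧
      1 - ε - c - η / c ≤ (Matrix.trace (W * D)).re := by
  have hQp := posSemidef_of_proj hQ hQ2
  have hQ1 : (1 - Q).PosSemidef := by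
    apply posSemidef_of_proj
    · exact Matrix.isHermitian_one.sub hQ
    · have : (1 - Q) * (1 - Q) = 1 - Q - Q + Q * Q := by noncomm_ring
      rw [this, hQ2]; abel
  refine ⟨(1 - B) * Q * (1 - B), posSemidef_sandwich hB1.1 hQp, ?_, ?_, ?_⟩
  · have h : 1 - B - (1 - B) * Q * (1 - B) =
        (B - B * B) + (1 - B) * (1 - Q) * (1 - B) := by noncomm_ring
    rw [h]
    exact (posSemidef_sub_sq hB hB1).add (posSemidef_sandwich hB1.1 hQ1)
  · rw [Matrix.mul_assoc, Matrix.trace_mul_comm, Matrix.mul_assoc]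
    have h := trace_mul_re_mono (B := (1 - B) * (1 - B)) (C := 1) hQp (by
      have h : 1 - (1 - B) * (1 - B) = B + (B - B * B) := by noncomm_ring
      rw [h]
      exact hB.add (posSemidef_sub_sq hB hB1))
    rwa [Matrix.mul_one] at h
  · have h1 := trace_mul_re_nonneg hW (posSemidef_sandwich hB.1 hQp)
    have h2 : 0 ≤ (Matrix.trace (W * ((B - (c : ℂ) • Q) * (B - (c : ℂ) • Q)))).re := by
      apply trace_mul_re_nonneg hW
      have hH : (B - (c : ℂ) • Q).IsHermitian := by
        apply hB.1.sub
        unfold Matrix.IsHermitian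
        rw [Matrix.conjTranspose_smul, hQ.eq]; simp
      have := Matrix.posSemidef_conjTranspose_mul_self (B - (c : ℂ) • Q)
      rwa [hH.eq] at this
    have h3 : (Matrix.trace (W * (B * B))).re ≤ η :=
      (trace_mul_re_mono hW (posSemidef_sub_sq hB hB1)).trans hWB
    have h4 : (Matrix.trace (W * Q)).re ≤ 1 := by
      have := trace_mul_re_mono hW hQ1
      rw [Matrix.mul_one, hWt] at this
      simpa using this
    have e2 : (Matrix.trace (W * ((B - (c : ℂ) • Q) * (B - (c : ℂ) • Q)))).re =
        (Matrix.trace (W * (B * B))).re - c * ((Matrix.trace (W * (B * Q))).re +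
          (Matrix.trace (W * (Q * B))).re) + c ^ 2 * (Matrix.trace (W * Q)).re := by
      have : W * ((B - (c : ℂ) • Q) * (B - (c : ℂ) • Q)) =
          W * (B * B) - (c : ℂ) • (W * (B * Q) + W * (Q * B)) + ((c ^ 2 : ℝ) : ℂ) • (W * Q) := by
        simp only [sub_mul, mul_sub, Matrix.smul_mul, Matrix.mul_smul, hQ2, smul_smul, smul_add]
        push_cast
        rw [pow_two]
        abel
      rw [this]
      simp only [Matrix.trace_add, Matrix.trace_sub, Matrix.trace_smul, smul_eq_mul,
        Complex.add_re, Complex.sub_re, Complex.re_ofReal_mul]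
    have e1 : (Matrix.trace (W * ((1 - B) * Q * (1 - B)))).re =
        (Matrix.trace (W * Q)).re - ((Matrix.trace (W * (B * Q))).re +
          (Matrix.trace (W * (Q * B))).re) + (Matrix.trace (W * (B * Q * B))).re := by
      have : W * ((1 - B) * Q * (1 - B)) =
          W * Q - (W * (B * Q) + W * (Q * B)) + W * (B * Q * B) := by noncomm_ring
      rw [this]
      simp only [Matrix.trace_add, Matrix.trace_sub, Complex.add_re, Complex.sub_re]
    rw [e2] at h2
    rw [e1]
    set s := (Matrix.trace (W * (B * Q))).re + (Matrix.trace (W * (Q * B))).re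
    have h5 : s ≤ c + η / c := by
      rw [← sub_nonneg]
      have : c + η / c - s = (c ^ 2 + η - c * s) / c := by field_simp
      rw [this]
      apply div_nonneg _ hc.le
      nlinarith [mul_le_mul_of_nonneg_left h4 (sq_nonneg c)]
    linarith

end MatrixHelpers

/-! ### Tensor powers -/

section Tensor

variable {d n : ℕ}

lemma tensorPow_mul (A B : Fin n → Mat d) :
    tensorPow A * tensorPow B = tensorPow fun i => A i * B i := by
  ext j k
  simp only [tensorPow, Matrix.mul_apply, Matrix.of_apply, ← Finset.prod_mul_distrib]
  rw [Fintype.prod_sum]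

lemma tensorPow_trace (A : Fin n → Mat d) :
    (tensorPow A).trace = ∏ i, (A i).trace := by
  simp only [tensorPow, Matrix.trace, Matrix.diag, Matrix.of_apply]
  rw [Fintype.prod_sum]

lemma tensorPow_one : tensorPow (fun _ : Fin n => (1 : Mat d)) = 1 := by
  ext j k
  simp only [tensorPow, Matrix.of_apply, Matrix.one_apply]
  by_cases h : j = k
  · simp [h]
  · rw [if_neg h]
    obtain ⟨i, hi⟩ := Function.ne_iff.1 h
    exact Finset.prod_eq_zero (Finset.mem_univ i) (by simp [hi])

lemma tensorPow_conjTranspose (A : Fin n → Mat d) :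
    (tensorPow A)ᴴ = tensorPow fun i => (A i)ᴴ := by
  ext j k
  simp [tensorPow, Matrix.conjTranspose_apply]

lemma tensorPow_sum {Y : Type*} [Fintype Y] (c : Fin n → Y → ℝ) (A : Fin n → Y → Mat d) :
    (tensorPow fun i => ∑ y, (c i y : ℂ) • A i y) =
      ∑ ys : Fin n → Y, ((∏ i, c i (ys i) : ℝ) : ℂ) • tensorPow fun i => A i (ys i) := by
  ext j k
  simp only [tensorPow, Matrix.of_apply, Matrix.sum_apply, Matrix.smul_apply, smul_eq_mul]
  rw [Fintype.prod_sum]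
  apply Finset.sum_congr rfl
  intro ys _
  rw [Finset.prod_mul_distrib]
  push_cast
  rfl

end Tensor
/-! ### Chebyshev's inequality for independent variables on a finite product -/

section Chebyshev

variable {n : ℕ} {Y : Type*} [Fintype Y]

lemma prod_weight_sum (p : Fin n → Y → ℝ) (hp : ∀ i, ∑ y, p i y = 1) :
    ∑ ys : Fin n → Y, ∏ i, p i (ys i) = 1 := by
  rw [← Fintype.prod_sum]
  simp [hp]

lemma cross_moment (p h : Fin n → Y → ℝ) (hp : ∀ i, ∑ y, p i y = 1)
    (hh : ∀ i, ∑ y, p i y * h i y = 0) (i j : Fin n) :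
    ∑ ys : Fin n → Y, (∏ k, p k (ys k)) * (h i (ys i) * h j (ys j)) =
      if i = j then ∑ y, p i y * h i y ^ 2 else 0 := by
  have h1 : ∀ ys : Fin n → Y, (∏ k, p k (ys k)) * (h i (ys i) * h j (ys j)) =
      ∏ k, (p k (ys k) * ((if k = i then h k (ys k) else 1) *
        (if k = j then h k (ys k) else 1))) := by
    intro ys
    rw [Finset.prod_mul_distrib, Finset.prod_mul_distrib]
    simp
  rw [Finset.sum_congr rfl fun ys _ => h1 ys]
  rw [← Fintype.prod_sum (fun k y => p k y * ((if k = i then h k y else 1) *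
        (if k = j then h k y else 1)))]
  by_cases hij : i = j
  · subst hij
    rw [if_pos rfl, Finset.prod_eq_single i]
    · simp [pow_two]
    · intro k _ hk
      simp [hk, hp]
    · simp
  · rw [if_neg hij]
    apply Finset.prod_eq_zero (Finset.mem_univ i)
    simp [hij, hh]

lemma second_moment (p h : Fin n → Y → ℝ) (hp : ∀ i, ∑ y, p i y = 1)
    (hh : ∀ i, ∑ y, p i y * h i y = 0) :
    ∑ ys : Fin n → Y, (∏ k, p k (ys k)) * (∑ i, h i (ys i)) ^ 2 =
      ∑ i, ∑ y, p i y * h i y ^ 2 := by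
  have h1 : ∀ ys : Fin n → Y, (∏ k, p k (ys k)) * (∑ i, h i (ys i)) ^ 2 =
      ∑ i, ∑ j, (∏ k, p k (ys k)) * (h i (ys i) * h j (ys j)) := by
    intro ys
    rw [pow_two, Finset.sum_mul_sum, Finset.mul_sum]
    simp_rw [Finset.mul_sum]
  rw [Finset.sum_congr rfl fun ys _ => h1 ys, Finset.sum_comm]
  apply Finset.sum_congr rfl
  intro i _
  rw [Finset.sum_comm]
  simp_rw [cross_moment p h hp hh]
  simp

lemma chebyshev (p h : Fin n → Y → ℝ) (hp0 : ∀ i y, 0 ≤ p i y) (hp : ∀ i, ∑ y, p i y = 1)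
    (hh : ∀ i, ∑ y, p i y * h i y = 0) (V δ : ℝ) (hδ : 0 < δ)
    (hV : ∑ i, ∑ y, p i y * h i y ^ 2 ≤ V) :
    ∑ ys ∈ Finset.univ.filter (fun ys : Fin n → Y => ¬ |∑ i, h i (ys i)| ≤ δ * √V),
      ∏ k, p k (ys k) ≤ 1 / δ ^ 2 := by
  have hw : ∀ ys : Fin n → Y, 0 ≤ ∏ k, p k (ys k) := fun ys =>
    Finset.prod_nonneg fun k _ => hp0 _ _
  have h2 := second_moment p h hp hh
  rw [← h2] at hV
  have hV0 : 0 ≤ V := le_trans (Finset.sum_nonneg fun ys _ => mul_nonneg (hw ys) (sq_nonneg _)) hV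
  have hsub : ∑ ys ∈ Finset.univ.filter (fun ys : Fin n → Y => ¬ |∑ i, h i (ys i)| ≤ δ * √V),
      (∏ k, p k (ys k)) * (∑ i, h i (ys i)) ^ 2 ≤ V :=
    le_trans (Finset.sum_le_sum_of_subset_of_nonneg (Finset.subset_univ _)
      fun ys _ _ => mul_nonneg (hw ys) (sq_nonneg _)) hV
  rcases hV0.eq_or_lt with hV0 | hV0
  · have hz : ∀ ys : Fin n → Y, (∏ k, p k (ys k)) * (∑ i, h i (ys i)) ^ 2 = 0 := by
      intro ys
      apply le_antisymm _ (mul_nonneg (hw ys) (sq_nonneg _))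
      rw [hV0]
      exact le_trans (Finset.single_le_sum
        (f := fun ys : Fin n → Y => (∏ k, p k (ys k)) * (∑ i, h i (ys i)) ^ 2)
        (fun ys _ => mul_nonneg (hw ys) (sq_nonneg _)) (Finset.mem_univ ys)) hV
    rw [Finset.sum_eq_zero]
    · positivity
    · intro ys hys
      rw [Finset.mem_filter, ← hV0] at hys
      have hne : ∑ i, h i (ys i) ≠ 0 := by
        intro h0
        apply hys.2
        rw [h0]; simp
      exact (mul_eq_zero.1 (hz ys)).resolve_right (pow_ne_zero 2 hne)
  · have hle : ∑ ys ∈ Finset.univ.filter (fun ys : Fin n → Y => ¬ |∑ i, h i (ys i)| ≤ δ * √V),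
        (∏ k, p k (ys k)) * (δ ^ 2 * V) ≤ V := by
      refine le_trans (Finset.sum_le_sum fun ys hys => ?_) hsub
      rw [Finset.mem_filter, not_le] at hys
      apply mul_le_mul_of_nonneg_left _ (hw ys)
      have h3 : (δ * √V) ^ 2 ≤ |∑ i, h i (ys i)| ^ 2 :=
        pow_le_pow_left₀ (by positivity) hys.2.le 2
      rwa [mul_pow, Real.sq_sqrt hV0.le, sq_abs] at h3
    rw [← Finset.sum_mul] at hle
    rw [le_div_iff₀ (by positivity)]
    have : (∑ ys ∈ Finset.univ.filter (fun ys : Fin n → Y => ¬ |∑ i, h i (ys i)| ≤ δ * √V),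
        ∏ k, p k (ys k)) * δ ^ 2 * V ≤ 1 * V := by linarith
    exact le_of_mul_le_mul_right this hV0

/-- Chebyshev's inequality for non-centred variables. -/
lemma chebyshev' (p g : Fin n → Y → ℝ) (μ : ℝ) (hp0 : ∀ i y, 0 ≤ p i y)
    (hp : ∀ i, ∑ y, p i y = 1) (hμ : ∑ i, ∑ y, p i y * g i y = μ)
    (V δ : ℝ) (hδ : 0 < δ)
    (hV : ∑ i, (∑ y, p i y * g i y ^ 2 - (∑ y, p i y * g i y) ^ 2) ≤ V) :
    ∑ ys ∈ Finset.univ.filter (fun ys : Fin n → Y => ¬ |∑ i, g i (ys i) - μ| ≤ δ * √V),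
      ∏ k, p k (ys k) ≤ 1 / δ ^ 2 := by
  have h := chebyshev p (fun i y => g i y - ∑ y, p i y * g i y) hp0 hp (by
    intro i
    simp_rw [mul_sub]
    rw [Finset.sum_sub_distrib, ← Finset.sum_mul, hp, one_mul, sub_self]) V δ hδ (by
    refine le_trans (le_of_eq ?_) hV
    apply Finset.sum_congr rfl
    intro i _
    have : ∀ y, p i y * (g i y - ∑ y, p i y * g i y) ^ 2 =
        p i y * g i y ^ 2 - 2 * (∑ y, p i y * g i y) * (p i y * g i y) +
          p i y * (∑ y, p i y * g i y) ^ 2 := by intro y; ring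
    simp_rw [this]
    rw [Finset.sum_add_distrib, Finset.sum_sub_distrib, ← Finset.sum_mul, hp, ← Finset.mul_sum]
    ring)
  simp_rw [Finset.sum_sub_distrib, hμ] at h
  exact h

/-- Complement form. -/
lemma good_weight (p : Fin n → Y → ℝ) (hp : ∀ i, ∑ y, p i y = 1) (ε : ℝ)
    (S : Finset (Fin n → Y)) (hS : ∑ ys ∈ Finset.univ.filter (fun ys => ys ∉ S),
      ∏ k, p k (ys k) ≤ ε) : 1 - ε ≤ ∑ ys ∈ S, ∏ k, p k (ys k) := by
  have h := prod_weight_sum p hp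
  rw [← Finset.sum_filter_add_sum_filter_not Finset.univ (fun ys => ys ∈ S)] at h
  rw [Finset.filter_univ_mem] at h
  linarith

end Chebyshev

/-! ### Diagonalizations -/

section Diag

variable {d n : ℕ}

/-- The entropy-type sums do not depend on the diagonalization. -/
lemma diag_unique {ρ : Mat d} {R R' : Fin d → ℝ} {π π' : Fin d → Mat d}
    (h : IsDiagonalization ρ R π) (h' : IsDiagonalization ρ R' π') (f : ℝ → ℝ) :
    ∑ j, f (R j) = ∑ j, f (R' j) := by
  obtain ⟨hp, hi, ht, ho, hs, hd, hR⟩ := h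
  obtain ⟨hp', hi', ht', ho', hs', hd', hR'⟩ := h'
  have e1 : ∀ j, π j * ρ = (R j : ℂ) • π j := by
    intro j
    rw [hd, Finset.mul_sum, Finset.sum_eq_single j]
    · rw [Matrix.mul_smul, hi]
    · intro k _ hk
      rw [Matrix.mul_smul, ho j k hk.symm, smul_zero]
    · simp
  have e2 : ∀ k, ρ * π' k = (R' k : ℂ) • π' k := by
    intro k
    rw [hd', Finset.sum_mul, Finset.sum_eq_single k]
    · rw [Matrix.smul_mul, hi']
    · intro j _ hj
      rw [Matrix.smul_mul, ho' j k hj, smul_zero]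
    · simp
  have e3 : ∀ j k, (R j : ℂ) * (π j * π' k).trace = (R' k : ℂ) * (π j * π' k).trace := by
    intro j k
    have := congrArg Matrix.trace (Matrix.mul_assoc (π j) ρ (π' k))
    rw [e1, e2, Matrix.smul_mul, Matrix.mul_smul, Matrix.trace_smul, Matrix.trace_smul] at this
    simpa using this
  have e4 : ∀ j k, (f (R j) : ℂ) * (π j * π' k).trace = (f (R' k) : ℂ) * (π j * π' k).trace := by
    intro j k
    by_cases h0 : (π j * π' k).trace = 0
    · rw [h0]; simp
    · have := mul_right_cancel₀ h0 (e3 j k)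
      rw [Complex.ofReal_inj] at this
      rw [this]
  have a1 : ∀ j, ∑ k, (π j * π' k).trace = 1 := by
    intro j
    rw [← Matrix.trace_sum, ← Finset.mul_sum, hs', Matrix.mul_one, ht]
  have a2 : ∀ k, ∑ j, (π j * π' k).trace = 1 := by
    intro k
    rw [← Matrix.trace_sum, ← Finset.sum_mul, hs, Matrix.one_mul, ht']
  have key : ∑ j, (f (R j) : ℂ) = ∑ k, (f (R' k) : ℂ) := by
    calc ∑ j, (f (R j) : ℂ) = ∑ j, ∑ k, (f (R j) : ℂ) * (π j * π' k).trace := by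
          apply Finset.sum_congr rfl; intro j _
          rw [← Finset.mul_sum, a1, mul_one]
      _ = ∑ k, ∑ j, (f (R' k) : ℂ) * (π j * π' k).trace := by
          rw [Finset.sum_comm]
          exact Finset.sum_congr rfl fun k _ => Finset.sum_congr rfl fun j _ => e4 j k
      _ = ∑ k, (f (R' k) : ℂ) := by
          apply Finset.sum_congr rfl; intro k _
          rw [← Finset.mul_sum, a2, mul_one]
  exact_mod_cast key

lemma exists_diag {ρ : Mat d} (h : IsState ρ) :
    ∃ π, IsDiagonalization ρ h.1.1.eigenvalues π := by
  set U : Mat d := (h.1.1.eigenvectorUnitary : Mat d) with hU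
  have hUU : star U * U = 1 := Unitary.coe_star_mul_self _
  have hUU' : U * star U = 1 := Unitary.coe_mul_star_self _
  have hmul : ∀ A B : Mat d, (U * A * star U) * (U * B * star U) = U * (A * B) * star U := by
    intro A B
    calc (U * A * star U) * (U * B * star U) = U * A * (star U * U) * B * star U := by
          noncomm_ring
      _ = _ := by rw [hUU]; noncomm_ring
  have hsing : ∀ j : Fin d, Matrix.single j j (1 : ℂ) = Matrix.diagonal (Pi.single j 1) := by
    intro j; exact (Matrix.diagonal_single j 1).symm
  have hsum1 : ∑ j : Fin d, Matrix.single j j (1 : ℂ) = 1 := Matrix.sum_single_one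
  refine ⟨fun j => U * Matrix.single j j 1 * star U, ?_, ?_, ?_, ?_, ?_, ?_, ?_, ?_⟩
  · intro j
    have : (Matrix.single j j (1 : ℂ)).PosSemidef := by
      apply posSemidef_of_proj
      · unfold Matrix.IsHermitian; simp
      · simp
    exact this.mul_mul_conjTranspose_same U
  · intro j; rw [hmul]; simp
  · intro j
    rw [Matrix.trace_mul_comm, ← Matrix.mul_assoc, hUU, Matrix.one_mul]; simp
  · intro j k hjk; rw [hmul, Matrix.single_mul_single_of_ne]; simp; exact hjk
  · rw [← Finset.sum_mul, ← Finset.mul_sum, hsum1, Matrix.mul_one, hUU']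
  · conv_lhs => rw [h.1.1.spectral_theorem]
    rw [Unitary.conjStarAlgAut_apply]
    have : (Matrix.diagonal (RCLike.ofReal ∘ h.1.1.eigenvalues) : Mat d) =
        ∑ j, (h.1.1.eigenvalues j : ℂ) • Matrix.single j j (1 : ℂ) := by
      ext a b
      simp [Matrix.diagonal_apply, Matrix.sum_apply, Matrix.single_apply]
      by_cases hab : a = b
      · subst hab; simp
      · simp [hab]
        rw [Finset.sum_eq_zero]
        intro x _
        rw [if_neg]
        rintro ⟨rfl, rfl⟩; exact hab rfl
    rw [this, Finset.mul_sum, Finset.sum_mul]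
    apply Finset.sum_congr rfl
    intro j _
    rw [Matrix.mul_smul, Matrix.smul_mul]
  · exact h.1.eigenvalues_nonneg
  · have := h.1.1.trace_eq_sum_eigenvalues
    apply Complex.ofReal_injective
    push_cast
    exact this.symm.trans h.2

lemma vnEntropy_eq {ρ : Mat d} (hρ : IsState ρ) {R : Fin d → ℝ} {π : Fin d → Mat d}
    (h : IsDiagonalization ρ R π) : vnEntropy ρ = shannonEntropy R := by
  obtain ⟨π', h'⟩ := exists_diag hρ
  unfold vnEntropy shannonEntropy
  rw [dif_pos hρ.1.1, diag_unique h h' (fun t => t * Real.logb 2 t)]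

variable {A : Fin n → Mat d} {R : Fin n → Fin d → ℝ} {π : Fin n → Fin d → Mat d}

lemma tproj_herm (h : ∀ i, IsDiagonalization (A i) (R i) (π i)) (js : Fin n → Fin d) :
    (tensorPow fun i => π i (js i)).IsHermitian := by
  unfold Matrix.IsHermitian
  rw [tensorPow_conjTranspose]
  congr 1
  funext i
  exact ((h i).1 (js i)).1.eq

lemma tproj_mul (h : ∀ i, IsDiagonalization (A i) (R i) (π i)) (js ks : Fin n → Fin d) :
    (tensorPow fun i => π i (js i)) * (tensorPow fun i => π i (ks i)) =
      if js = ks then tensorPow fun i => π i (js i) else 0 := by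
  rw [tensorPow_mul]
  by_cases hjk : js = ks
  · subst hjk
    rw [if_pos rfl]
    congr 1
    funext i
    exact (h i).2.1 (js i)
  · rw [if_neg hjk]
    obtain ⟨i, hi⟩ := Function.ne_iff.1 hjk
    ext a b
    simp only [tensorPow, Matrix.of_apply, Matrix.zero_apply]
    apply Finset.prod_eq_zero (Finset.mem_univ i)
    rw [(h i).2.2.2.1 _ _ hi, Matrix.zero_apply]

lemma tproj_posSemidef (h : ∀ i, IsDiagonalization (A i) (R i) (π i)) (js : Fin n → Fin d) :
    (tensorPow fun i => π i (js i)).PosSemidef :=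
  posSemidef_of_proj (tproj_herm h js) (by rw [tproj_mul h, if_pos rfl])

lemma tproj_trace (h : ∀ i, IsDiagonalization (A i) (R i) (π i)) (js : Fin n → Fin d) :
    (tensorPow fun i => π i (js i)).trace = 1 := by
  rw [tensorPow_trace]
  exact Finset.prod_eq_one fun i _ => (h i).2.2.1 _

lemma tproj_sum (h : ∀ i, IsDiagonalization (A i) (R i) (π i)) :
    ∑ js : Fin n → Fin d, (tensorPow fun i => π i (js i)) = 1 := by
  have h1 := tensorPow_sum (fun _ _ => 1) π
  simp only [Complex.ofReal_one, one_smul, Finset.prod_const_one] at h1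
  rw [← h1, ← tensorPow_one]
  congr 1
  funext i
  exact (h i).2.2.2.2.1

lemma tdiag (h : ∀ i, IsDiagonalization (A i) (R i) (π i)) :
    tensorPow A = ∑ js : Fin n → Fin d,
      ((∏ i, R i (js i) : ℝ) : ℂ) • tensorPow fun i => π i (js i) := by
  rw [← tensorPow_sum]
  congr 1
  funext i
  exact (h i).2.2.2.2.2.1

lemma tstate (h : ∀ i, IsDiagonalization (A i) (R i) (π i)) : IsState (tensorPow A) := by
  constructor
  · rw [tdiag h]
    apply Matrix.posSemidef_sum
    intro js _
    apply (tproj_posSemidef h js).smul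
    rw [Complex.zero_le_real]
    exact Finset.prod_nonneg fun i _ => (h i).2.2.2.2.2.2.1 _
  · rw [tdiag h, Matrix.trace_sum]
    simp_rw [Matrix.trace_smul, tproj_trace h, smul_eq_mul, mul_one]
    rw [← Complex.ofReal_sum, prod_weight_sum R fun i => (h i).2.2.2.2.2.2.2]
    simp

lemma tS_herm (h : ∀ i, IsDiagonalization (A i) (R i) (π i)) (S : Finset (Fin n → Fin d)) :
    (∑ js ∈ S, tensorPow fun i => π i (js i)).IsHermitian := by
  unfold Matrix.IsHermitian
  rw [Matrix.conjTranspose_sum]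
  exact Finset.sum_congr rfl fun js _ => tproj_herm h js

lemma tS_idem (h : ∀ i, IsDiagonalization (A i) (R i) (π i)) (S : Finset (Fin n → Fin d)) :
    (∑ js ∈ S, tensorPow fun i => π i (js i)) * (∑ js ∈ S, tensorPow fun i => π i (js i)) =
      ∑ js ∈ S, tensorPow fun i => π i (js i) := by
  rw [Finset.sum_mul_sum]
  apply Finset.sum_congr rfl
  intro js hjs
  simp_rw [tproj_mul h]
  rw [Finset.sum_ite_eq, if_pos hjs]

lemma tS_trace (h : ∀ i, IsDiagonalization (A i) (R i) (π i)) (S : Finset (Fin n → Fin d)) :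
    (Matrix.trace (∑ js ∈ S, tensorPow fun i => π i (js i))).re = S.card := by
  rw [Matrix.trace_sum]
  simp_rw [tproj_trace h]
  simp

lemma tS_prob (h : ∀ i, IsDiagonalization (A i) (R i) (π i)) (S : Finset (Fin n → Fin d)) :
    (Matrix.trace (tensorPow A * ∑ js ∈ S, tensorPow fun i => π i (js i))).re =
      ∑ js ∈ S, ∏ i, R i (js i) := by
  rw [tdiag h, Finset.mul_sum, Matrix.trace_sum, Complex.re_sum]
  apply Finset.sum_congr rfl
  intro js _
  rw [Finset.sum_mul, Finset.sum_eq_single js]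
  · rw [Matrix.smul_mul, tproj_mul h, if_pos rfl, Matrix.trace_smul, tproj_trace h]
    simp only [smul_eq_mul, mul_one, Complex.ofReal_re]
  · intro ks _ hk
    rw [Matrix.smul_mul, tproj_mul h, if_neg hk, smul_zero]
  · simp

end Diag
/-! ### Entropy estimates -/

section Entropy

/-- The constant bounding `√t · |log₂ t|` on `[0,1]`. -/
def Clog : ℝ := 2 / Real.log 2

lemma Clog_pos : 0 < Clog := div_pos two_pos (Real.log_pos one_lt_two)

lemma sqrt_mul_abs_log {t : ℝ} (h0 : 0 ≤ t) (h1 : t ≤ 1) : √t * |Real.logb 2 t| ≤ Clog := by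
  have hl : Real.logb 2 t ≤ 0 := Real.logb_nonpos one_lt_two h0 h1
  have hs := Real.negMulLog_le_one_sub_self (Real.sqrt_nonneg t)
  have hs0 := Real.sqrt_nonneg t
  rw [Real.negMulLog, Real.log_sqrt h0] at hs
  rw [abs_of_nonpos hl, Clog, Real.logb, le_div_iff₀ (Real.log_pos one_lt_two)]
  have h2 := Real.log_pos one_lt_two
  have : √t * -(Real.log t / Real.log 2) * Real.log 2 = -(√t * Real.log t) := by field_simp
  rw [this]
  linarith

lemma mul_log_sq {t : ℝ} (h0 : 0 ≤ t) (h1 : t ≤ 1) : t * Real.logb 2 t ^ 2 ≤ Clog ^ 2 := by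
  have h := pow_le_pow_left₀ (by positivity) (sqrt_mul_abs_log h0 h1) 2
  rwa [mul_pow, Real.sq_sqrt h0, sq_abs] at h

lemma abs_mul_log {t : ℝ} (h0 : 0 ≤ t) (h1 : t ≤ 1) : |t * Real.logb 2 t| ≤ Clog := by
  rw [abs_mul, abs_of_nonneg h0]
  refine le_trans (mul_le_mul_of_nonneg_right ?_ (abs_nonneg _)) (sqrt_mul_abs_log h0 h1)
  exact Real.le_sqrt_of_sq_le (by nlinarith)

lemma IsProbDist.le_one {X : Type*} [Fintype X] {P : X → ℝ} (h : IsProbDist P) (x : X) :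
    P x ≤ 1 := by
  rw [← h.2]
  exact Finset.single_le_sum (fun y _ => h.1 y) (Finset.mem_univ x)

lemma abs_shannon {d : ℕ} {R : Fin d → ℝ} (h : IsProbDist R) :
    |shannonEntropy R| ≤ d * Clog := by
  rw [shannonEntropy, abs_neg]
  refine (Finset.abs_sum_le_sum_abs _ _).trans ?_
  refine (Finset.sum_le_sum fun j _ => abs_mul_log (h.1 j) (h.le_one j)).trans ?_
  simp

lemma prod_eq_rpow {n : ℕ} (r : Fin n → ℝ) (h : ∀ i, 0 < r i) :
    ∏ i, r i = (2 : ℝ) ^ (∑ i, Real.logb 2 (r i)) := by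
  rw [Real.rpow_sum_of_pos two_pos]
  exact Finset.prod_congr rfl fun i _ => (Real.rpow_logb two_pos (by norm_num) (h i)).symm

/-- A shadow of a product state has a large trace. -/
lemma shadow_lower {d n : ℕ} {ρ : Mat d} {R : Fin d → ℝ} {π : Fin d → Mat d}
    (h : IsDiagonalization ρ R π) {B : MatPow d n} (hB : B.PosSemidef)
    (hB1 : (1 - B).PosSemidef) {θ : ℝ} (hθ : 0 < θ)
    (hsh : θ ≤ (Matrix.trace (tensorPow (fun _ => ρ) * B)).re) :
    θ / 2 * (2 : ℝ) ^ (n * shannonEntropy R - √(2 / θ) * √(n * (d * Clog ^ 2))) ≤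
      (Matrix.trace B).re := by
  have hd : ∀ _ : Fin n, IsDiagonalization ρ R π := fun _ => h
  have hR : IsProbDist R := h.2.2.2.2.2.2
  set E : ℝ := √(2 / θ) * √(n * (d * Clog ^ 2)) with hE
  set w : (Fin n → Fin d) → ℝ := fun js => ∏ i, R (js i) with hw
  set b : (Fin n → Fin d) → ℝ := fun js =>
    (Matrix.trace ((tensorPow fun i => π (js i)) * B)).re with hb
  have hw0 : ∀ js, 0 ≤ w js := fun js => Finset.prod_nonneg fun i _ => hR.1 _
  have hb0 : ∀ js, 0 ≤ b js := fun js => trace_mul_re_nonneg (tproj_posSemidef hd js) hB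
  have hb1 : ∀ js, b js ≤ 1 := by
    intro js
    have := trace_mul_re_mono (tproj_posSemidef hd js) hB1
    rw [Matrix.mul_one, tproj_trace hd] at this
    simpa using this
  have hbs : ∑ js, b js = (Matrix.trace B).re := by
    rw [hb, ← Complex.re_sum, ← Matrix.trace_sum, ← Finset.sum_mul, tproj_sum hd, Matrix.one_mul]
  have hwb : (Matrix.trace (tensorPow (fun _ => ρ) * B)).re = ∑ js, w js * b js := by
    rw [tdiag hd, Finset.sum_mul, Matrix.trace_sum, Complex.re_sum]
    apply Finset.sum_congr rfl
    intro js _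
    rw [Matrix.smul_mul, Matrix.trace_smul, smul_eq_mul, Complex.re_ofReal_mul]
  rw [hwb] at hsh
  have hcheb := chebyshev' (fun _ : Fin n => R) (fun _ j => Real.logb 2 (R j))
    (n * ∑ j, R j * Real.logb 2 (R j)) (fun _ => hR.1) (fun _ => hR.2) (by simp)
    (n * (d * Clog ^ 2)) (√(2 / θ)) (Real.sqrt_pos.2 (by positivity)) (by
      have : ∀ i ∈ (Finset.univ : Finset (Fin n)), (∑ y, R y * Real.logb 2 (R y) ^ 2 -
          (∑ y, R y * Real.logb 2 (R y)) ^ 2) ≤ d * Clog ^ 2 := by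
        intro i _
        have h1 : ∑ y, R y * Real.logb 2 (R y) ^ 2 ≤ ∑ y : Fin d, Clog ^ 2 :=
          Finset.sum_le_sum fun j _ => mul_log_sq (hR.1 j) (hR.le_one j)
        simp only [Finset.sum_const, Finset.card_univ, Fintype.card_fin, nsmul_eq_mul] at h1
        nlinarith [sq_nonneg (∑ y, R y * Real.logb 2 (R y))]
      refine (Finset.sum_le_sum this).trans ?_
      simp)
  rw [Real.sq_sqrt (by positivity), one_div_div] at hcheb
  set Bad := Finset.univ.filter (fun js : Fin n → Fin d =>
    ¬ |∑ i, Real.logb 2 (R (js i)) - n * ∑ j, R j * Real.logb 2 (R j)| ≤ E) with hBad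
  have hcheb' : ∑ js ∈ Bad, w js ≤ θ / 2 := hcheb
  have hpt : ∀ js, w js * b js ≤ (if js ∈ Bad then w js else 0) +
      (2 : ℝ) ^ (-(n * shannonEntropy R) + E) * b js := by
    intro js
    have hpos : (0:ℝ) < (2 : ℝ) ^ (-(n * shannonEntropy R) + E) := Real.rpow_pos_of_pos two_pos _
    by_cases hjs : js ∈ Bad
    · rw [if_pos hjs]
      have := mul_le_mul_of_nonneg_left (hb1 js) (hw0 js)
      have := mul_nonneg hpos.le (hb0 js)
      linarith
    · rw [if_neg hjs, zero_add]
      apply mul_le_mul_of_nonneg_right _ (hb0 js)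
      by_cases hz : ∀ i, 0 < R (js i)
      · rw [hw]
        simp only
        rw [prod_eq_rpow _ hz]
        apply Real.rpow_le_rpow_of_exponent_le one_le_two
        rw [hBad, Finset.mem_filter] at hjs
        have h3 := not_not.1 fun h => hjs ⟨Finset.mem_univ _, h⟩
        have h4 := (abs_le.1 h3).2
        rw [shannonEntropy]
        linarith
      · push Not at hz
        obtain ⟨i, hi⟩ := hz
        have : w js = 0 := Finset.prod_eq_zero (Finset.mem_univ i) (le_antisymm hi (hR.1 _))
        rw [this]; exact hpos.le
  have hfin := hsh.trans (Finset.sum_le_sum fun js _ => hpt js)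
  rw [Finset.sum_add_distrib, ← Finset.mul_sum, hbs, Finset.sum_ite_mem, Finset.univ_inter] at hfin
  have h5 : θ / 2 ≤ (2 : ℝ) ^ (-(n * shannonEntropy R) + E) * (Matrix.trace B).re := by linarith
  have h6 : (2 : ℝ) ^ (n * shannonEntropy R - E) * (2 : ℝ) ^ (-(n * shannonEntropy R) + E) = 1 := by
    rw [← Real.rpow_add two_pos]
    ring_nf
    simp
  have h7 := mul_le_mul_of_nonneg_left h5
    (Real.rpow_pos_of_pos two_pos (n * shannonEntropy R - E)).le
  rw [← mul_assoc, h6, one_mul] at h7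
  linarith

lemma sum_eq_count {X : Type*} [Fintype X] {n d : ℕ} (xs : Fin n → X) (js : Fin n → Fin d)
    (g : X → Fin d → ℝ) : ∑ i, g (xs i) (js i) =
      ∑ x, ∑ k, ((Finset.univ.filter fun i => xs i = x ∧ js i = k).card : ℝ) * g x k := by
  have h1 : ∀ x k, ((Finset.univ.filter fun i => xs i = x ∧ js i = k).card : ℝ) * g x k =
      ∑ i, if xs i = x then (if js i = k then g x k else 0) else 0 := by
    intro x k
    rw [← nsmul_eq_mul, ← Finset.sum_const, Finset.sum_filter]
    apply Finset.sum_congr rfl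
    intro i _
    split_ifs <;> simp_all
  simp_rw [h1]
  have h2 : ∀ x, ∑ k, ∑ i, (if xs i = x then (if js i = k then g x k else 0) else 0) =
      ∑ i, if xs i = x then g x (js i) else 0 := by
    intro x
    rw [Finset.sum_comm]
    apply Finset.sum_congr rfl
    intro i _
    split_ifs <;> simp
  simp_rw [h2]
  rw [Finset.sum_comm]
  simp

lemma sum_eq_countIn {X : Type*} [Fintype X] {n : ℕ} (xs : Fin n → X)
    (g : X → ℝ) : ∑ i, g (xs i) = ∑ x, (countIn x xs : ℝ) * g x := by
  have h1 : ∀ x, (countIn x xs : ℝ) * g x = ∑ i, if xs i = x then g x else 0 := by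
    intro x
    rw [countIn, ← nsmul_eq_mul, ← Finset.sum_const, Finset.sum_filter]
  simp_rw [h1]
  rw [Finset.sum_comm]
  simp

lemma countIn_le {X : Type*} {n : ℕ} (x : X) (xs : Fin n → X) : countIn x xs ≤ n := by
  unfold countIn
  exact (Finset.card_filter_le _ _).trans (by simp)

/-- Cardinality bound for the conditionally typical set. -/
lemma condTypical_card {X : Type*} [Fintype X] {n d : ℕ} (xs : Fin n → X)
    (q : X → Fin d → ℝ) (hq : ∀ x, IsProbDist (q x)) {δ : ℝ} (hδ : 0 < δ) :
    ((condTypicalSet xs q δ).card : ℝ) ≤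
      (2 : ℝ) ^ (∑ i, shannonEntropy (q (xs i)) +
        δ * Clog * (Fintype.card X * d) * √n) := by
  set T : ℝ := ∑ i, shannonEntropy (q (xs i)) + δ * Clog * (Fintype.card X * d) * √n with hT
  have hpt : ∀ js ∈ condTypicalSet xs q δ, (2 : ℝ) ^ (-T) ≤ ∏ i, q (xs i) (js i) := by
    intro js hjs
    rw [condTypicalSet, Finset.mem_filter] at hjs
    have hjs := hjs.2
    have hpos : ∀ i, 0 < q (xs i) (js i) := by
      intro i
      rcases ((hq (xs i)).1 (js i)).eq_or_lt with h0 | h0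
      · exfalso
        have h1 := hjs (xs i) (js i)
        rw [← h0] at h1
        simp only [mul_zero, sub_zero, zero_mul, Real.sqrt_zero] at h1
        have h2 := abs_nonpos_iff.1 h1
        rw [Nat.cast_eq_zero, Finset.card_eq_zero] at h2
        have : i ∈ Finset.univ.filter fun i' => xs i' = xs i ∧ js i' = js i := by simp
        rw [h2] at this
        simp at this
      · exact h0
    rw [prod_eq_rpow _ hpos]
    apply Real.rpow_le_rpow_of_exponent_le one_le_two
    rw [sum_eq_count xs js fun x k => Real.logb 2 (q x k), hT,
      sum_eq_countIn xs fun x => shannonEntropy (q x)]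
    have hterm : ∀ x k, (countIn x xs : ℝ) * (q x k * Real.logb 2 (q x k)) - δ * Clog * √n ≤
        ((Finset.univ.filter fun i => xs i = x ∧ js i = k).card : ℝ) * Real.logb 2 (q x k) := by
      intro x k
      have h1 := hjs x k
      set N : ℝ := ((Finset.univ.filter fun i => xs i = x ∧ js i = k).card : ℝ)
      have hq0 := (hq x).1 k
      have hq1 := (hq x).le_one k
      have h2 : |N - countIn x xs * q x k| * |Real.logb 2 (q x k)| ≤ δ * Clog * √n := by
        have ha : √(countIn x xs : ℝ) ≤ √n :=
          Real.sqrt_le_sqrt (by exact_mod_cast countIn_le x xs)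
        have hb : √(q x k * (1 - q x k)) ≤ √(q x k) :=
          Real.sqrt_le_sqrt (by nlinarith)
        calc |N - countIn x xs * q x k| * |Real.logb 2 (q x k)|
            ≤ (δ * √(countIn x xs) * √(q x k * (1 - q x k))) * |Real.logb 2 (q x k)| :=
              mul_le_mul_of_nonneg_right h1 (abs_nonneg _)
          _ ≤ (δ * √n * √(q x k)) * |Real.logb 2 (q x k)| := by gcongr
          _ = δ * √n * (√(q x k) * |Real.logb 2 (q x k)|) := by ring
          _ ≤ δ * √n * Clog := by
              apply mul_le_mul_of_nonneg_left (sqrt_mul_abs_log hq0 hq1) (by positivity)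
          _ = _ := by ring
      rw [← abs_mul] at h2
      have h3 := (abs_le.1 h2).1
      linarith
    have hsum := Finset.sum_le_sum fun x (_ : x ∈ (Finset.univ : Finset X)) =>
      Finset.sum_le_sum fun k (_ : k ∈ (Finset.univ : Finset (Fin d))) => hterm x k
    refine le_trans (le_of_eq ?_) hsum
    simp only [Finset.sum_sub_distrib, Finset.sum_const, Finset.card_univ, Fintype.card_fin,
      nsmul_eq_mul, shannonEntropy, mul_neg, Finset.sum_neg_distrib, ← Finset.mul_sum]
    ring
  have h1 := Finset.sum_le_sum hpt
  rw [Finset.sum_const, nsmul_eq_mul] at h1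
  have h2 : ∑ js ∈ condTypicalSet xs q δ, ∏ i, q (xs i) (js i) ≤ 1 := by
    rw [← prod_weight_sum (fun i => q (xs i)) fun i => (hq _).2]
    exact Finset.sum_le_sum_of_subset_of_nonneg (Finset.subset_univ _)
      fun js _ _ => Finset.prod_nonneg fun i _ => (hq _).1 _
  have h3 := h1.trans h2
  rw [Real.rpow_neg two_pos.le, ← div_eq_mul_inv,
    div_le_one (Real.rpow_pos_of_pos two_pos _)] at h3
  exact h3

lemma union_bound {Ω I : Type*} [Fintype Ω] [Fintype I] (w : Ω → ℝ) (hw0 : ∀ o, 0 ≤ w o)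
    (bad : I → Ω → Prop) (ε : ℝ) (hbad : ∀ i, ∑ o, (if bad i o then w o else 0) ≤ ε)
    (S : Finset Ω) (hS : ∀ o, o ∉ S → ∃ i, bad i o) :
    ∑ o ∈ Finset.univ.filter (fun o => o ∉ S), w o ≤ Fintype.card I * ε := by
  have hnn : ∀ i o, 0 ≤ (if bad i o then w o else 0) := by
    intro i o
    split_ifs
    · exact hw0 o
    · exact le_rfl
  have hpt : ∀ o, (if o ∉ S then w o else 0) ≤ ∑ i, (if bad i o then w o else 0) := by
    intro o
    by_cases ho : o ∈ S
    · rw [if_neg (not_not.2 ho)]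
      exact Finset.sum_nonneg fun i _ => hnn i o
    · rw [if_pos ho]
      obtain ⟨i, hb⟩ := hS o ho
      calc w o = (if bad i o then w o else 0) := by rw [if_pos hb]
        _ ≤ _ := Finset.single_le_sum (f := fun i => if bad i o then w o else 0)
              (fun i _ => hnn i o) (Finset.mem_univ i)
  rw [Finset.sum_filter]
  refine (Finset.sum_le_sum fun o _ => hpt o).trans ?_
  rw [Finset.sum_comm]
  refine (Finset.sum_le_sum fun i _ => hbad i).trans ?_
  simp

/-- Failure of the typicality condition at one pair of letters is unlikely. -/
lemma condTypical_bad {X : Type*} [Fintype X] {n d : ℕ} (xs : Fin n → X)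
    (q : X → Fin d → ℝ) (hq : ∀ x, IsProbDist (q x)) {δ : ℝ} (hδ : 0 < δ) (x : X) (k : Fin d) :
    ∑ js : Fin n → Fin d, (if ¬ |((Finset.univ.filter fun i => xs i = x ∧ js i = k).card : ℝ) -
      (countIn x xs : ℝ) * q x k|
      ≤ δ * Real.sqrt (countIn x xs) * Real.sqrt (q x k * (1 - q x k)) then
        ∏ i, q (xs i) (js i) else 0) ≤ 1 / δ ^ 2 := by
  have h := chebyshev' (fun i => q (xs i))
    (fun i j => if xs i = x then (if j = k then (1 : ℝ) else 0) else 0)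
    (countIn x xs * q x k) (fun i => (hq _).1) (fun i => (hq _).2) (by
      have := sum_eq_countIn xs (fun x' => if x' = x then q x' k else 0)
      simp only [mul_ite, mul_zero, Finset.sum_ite_eq', Finset.mem_univ, if_true] at this
      rw [← this]
      apply Finset.sum_congr rfl
      intro i _
      by_cases hx : xs i = x <;> simp [hx])
    (countIn x xs * (q x k * (1 - q x k))) δ hδ (by
      have := sum_eq_countIn xs (fun x' => if x' = x then q x' k * (1 - q x' k) else 0)
      simp only [mul_ite, mul_zero, Finset.sum_ite_eq', Finset.mem_univ, if_true] at this
      rw [← this]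
      apply le_of_eq
      apply Finset.sum_congr rfl
      intro i _
      by_cases hx : xs i = x
      · simp [hx]; ring
      · simp [hx])
  rw [Finset.sum_filter] at h
  refine le_trans (le_of_eq ?_) h
  apply Finset.sum_congr rfl
  intro js _
  have e1 : ∑ i, (if xs i = x then (if js i = k then (1 : ℝ) else 0) else 0) =
      ((Finset.univ.filter fun i => xs i = x ∧ js i = k).card : ℝ) := by
    rw [Finset.card_filter]
    push_cast
    apply Finset.sum_congr rfl
    intro i _
    split_ifs <;> simp_all
  rw [e1, Real.sqrt_mul (Nat.cast_nonneg _), ← mul_assoc]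

/-- The conditionally typical set has large probability. -/
lemma condTypical_prob {X : Type*} [Fintype X] {n d : ℕ} (xs : Fin n → X)
    (q : X → Fin d → ℝ) (hq : ∀ x, IsProbDist (q x)) {δ : ℝ} (hδ : 0 < δ) :
    1 - Fintype.card X * d * (1 / δ ^ 2) ≤
      ∑ js ∈ condTypicalSet xs q δ, ∏ i, q (xs i) (js i) := by
  apply good_weight (fun i => q (xs i)) fun i => (hq _).2
  have h := union_bound (I := X × Fin d) (fun js : Fin n → Fin d => ∏ i, q (xs i) (js i))
    (fun js => Finset.prod_nonneg fun i _ => (hq _).1 _)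
    (fun xk js => ¬ |((Finset.univ.filter fun i => xs i = xk.1 ∧ js i = xk.2).card : ℝ) -
      (countIn xk.1 xs : ℝ) * q xk.1 xk.2|
      ≤ δ * Real.sqrt (countIn xk.1 xs) * Real.sqrt (q xk.1 xk.2 * (1 - q xk.1 xk.2)))
    (1 / δ ^ 2)
    (fun xk => by convert condTypical_bad xs q hq hδ xk.1 xk.2) (condTypicalSet xs q δ) (by
      intro js hjs
      by_contra hcon
      rw [not_exists] at hcon
      apply hjs
      rw [condTypicalSet, Finset.mem_filter]
      exact ⟨Finset.mem_univ _, fun x k => not_not.1 (hcon (x, k))⟩)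
  rw [Fintype.card_prod, Fintype.card_fin] at h
  push_cast at h
  convert h

end Entropy
/-! ### The greedy construction -/

section Greedy

variable {X : Type} [Fintype X] {d n : ℕ}

lemma avgState_isState {P : X → ℝ} (hP : IsProbDist P) {W : X → Mat d}
    (hW : ∀ x, IsState (W x)) : IsState (avgState P W) := by
  constructor
  · apply Matrix.posSemidef_sum
    intro x _
    apply (hW x).1.smul
    rw [Complex.zero_le_real]
    exact hP.1 x
  · rw [avgState, Matrix.trace_sum]
    simp_rw [Matrix.trace_smul, (hW _).2, smul_eq_mul, mul_one]
    rw [← Complex.ofReal_sum, hP.2]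
    simp

lemma avg_trace (P : X → ℝ) (W : X → Mat d) (B : MatPow d n) :
    (Matrix.trace (tensorPow (fun _ => avgState P W) * B)).re =
      ∑ xs : Fin n → X, (∏ i, P (xs i)) *
        (Matrix.trace (tensorPow (fun i => W (xs i)) * B)).re := by
  have h := tensorPow_sum (n := n) (fun _ => P) (fun _ => W)
  have h' : tensorPow (fun _ : Fin n => avgState P W) = _ := h
  rw [h', Finset.sum_mul, Matrix.trace_sum, Complex.re_sum]
  apply Finset.sum_congr rfl
  intro xs _
  rw [Matrix.smul_mul, Matrix.trace_smul, smul_eq_mul, Complex.re_ofReal_mul]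

/-- Input sequences for which the empirical mean of `h` is close to its expectation. -/
lemma input_typical {P : X → ℝ} (hP : IsProbDist P) (h : X → ℝ) {M : ℝ}
    (hM : ∀ x, |h x| ≤ M) {τ : ℝ} (hτ : 0 < τ) (A : Finset (Fin n → X))
    (hA : τ ≤ prodProb P A) :
    τ / 2 ≤ ∑ xs ∈ A.filter (fun xs => |∑ i, h (xs i) - n * ∑ x, P x * h x| ≤
      √(2 / τ) * √(n * M ^ 2)), ∏ i, P (xs i) := by
  have hc := chebyshev' (fun _ : Fin n => P) (fun _ => h) (n * ∑ x, P x * h x)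
    (fun _ => hP.1) (fun _ => hP.2) (by simp) (n * M ^ 2) (√(2 / τ))
    (Real.sqrt_pos.2 (by positivity)) (by
      have : ∀ i ∈ (Finset.univ : Finset (Fin n)), (∑ y, P y * h y ^ 2 -
          (∑ y, P y * h y) ^ 2) ≤ M ^ 2 := by
        intro i _
        have h1 : ∑ y, P y * h y ^ 2 ≤ ∑ y, P y * M ^ 2 := by
          apply Finset.sum_le_sum
          intro y _
          apply mul_le_mul_of_nonneg_left _ (hP.1 y)
          exact sq_le_sq' (abs_le.1 (hM y)).1 (abs_le.1 (hM y)).2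
        rw [← Finset.sum_mul, hP.2, one_mul] at h1
        nlinarith [sq_nonneg (∑ y, P y * h y)]
      refine (Finset.sum_le_sum this).trans ?_
      simp)
  rw [Real.sq_sqrt (by positivity), one_div_div] at hc
  rw [prodProb, ← Finset.sum_filter_add_sum_filter_not A (fun xs =>
    |∑ i, h (xs i) - n * ∑ x, P x * h x| ≤ √(2 / τ) * √(n * M ^ 2))] at hA
  have hle : ∑ xs ∈ A.filter (fun xs => ¬ |∑ i, h (xs i) - n * ∑ x, P x * h x| ≤
      √(2 / τ) * √(n * M ^ 2)), ∏ i, P (xs i) ≤ τ / 2 := by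
    refine le_trans ?_ hc
    apply Finset.sum_le_sum_of_subset_of_nonneg
    · exact Finset.filter_subset_filter _ (Finset.subset_univ _)
    · intro xs _ _
      exact Finset.prod_nonneg fun i _ => hP.1 _
  linarith

/-- A partial code of size `k` with codewords in `A`. -/
def PreCode (W : X → Mat d) (q : X → Fin d → ℝ) (π : X → Fin d → Mat d) (δ lam : ℝ)
    (A : Finset (Fin n → X)) (k : ℕ) : Prop :=
  ∃ (f : Fin k → Fin n → X) (D : Fin k → MatPow d n),
    (∀ m, (D m).PosSemidef) ∧ (1 - ∑ m, D m).PosSemidef ∧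
    ∀ m, f m ∈ A ∧
      (Matrix.trace (D m)).re ≤ (Matrix.trace (condTypicalProj (f m) q π δ)).re ∧
      1 - lam ≤ (Matrix.trace (tensorPow (fun i => W (f m i)) * D m)).re

lemma precode_zero (W : X → Mat d) (q : X → Fin d → ℝ) (π : X → Fin d → Mat d) (δ lam : ℝ)
    (A : Finset (Fin n → X)) : PreCode W q π δ lam A 0 := by
  refine ⟨Fin.elim0, Fin.elim0, fun m => m.elim0, ?_, fun m => m.elim0⟩
  simpa using Matrix.PosSemidef.one

lemma precode_step {W : X → Mat d} {q : X → Fin d → ℝ} {π : X → Fin d → Mat d} {δ lam : ℝ}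
    (hd : ∀ x, IsDiagonalization (W x) (q x) (π x)) (hlam : 0 < lam) (hδ : 0 < δ)
    (hδ' : Fintype.card X * d * (1 / δ ^ 2) ≤ lam / 3)
    (A : Finset (Fin n → X)) (L : ℝ)
    (hL : ∀ xs ∈ A, ((condTypicalSet xs q δ).card : ℝ) ≤ L)
    (k : ℕ) (hk : PreCode W q π δ lam A k) :
    PreCode W q π δ lam A (k + 1) ∨
      ∃ B : MatPow d n, B.PosSemidef ∧ (1 - B).PosSemidef ∧
        (∀ xs ∈ A, lam ^ 2 / 9 ≤ (Matrix.trace (tensorPow (fun i => W (xs i)) * B)).re) ∧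
        (Matrix.trace B).re ≤ k * L := by
  have hcP : ∀ xs : Fin n → X, condTypicalProj xs q π δ =
      ∑ js ∈ condTypicalSet xs q δ, tensorPow fun i => π (xs i) (js i) := fun _ => rfl
  obtain ⟨f, D, hD, hD1, hf⟩ := hk
  have hB : (∑ m, D m).PosSemidef := Matrix.posSemidef_sum _ fun m _ => hD m
  by_cases hex : ∃ xs ∈ A, (Matrix.trace (tensorPow (fun i => W (xs i)) * ∑ m, D m)).re ≤
      lam ^ 2 / 9
  · left
    obtain ⟨xs, hxs, hle⟩ := hex
    have hdx : ∀ i, IsDiagonalization (W (xs i)) (q (xs i)) (π (xs i)) := fun i => hd (xs i)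
    have hst := tstate hdx
    obtain ⟨D', h1, h2, h3, h4⟩ := cut_down (c := lam / 3) (ε := lam / 3)
      (Q := condTypicalProj xs q π δ) hst.1 hst.2 hB hD1
      (tS_herm hdx _) (tS_idem hdx _) (by positivity) (by
        rw [hcP, tS_prob hdx]
        have := condTypical_prob xs q (fun x => (hd x).2.2.2.2.2.2) hδ
        linarith) hle
    refine ⟨Fin.snoc (α := fun _ => Fin n → X) f xs,
      Fin.snoc (α := fun _ => MatPow d n) D D', ?_, ?_, ?_⟩
    · intro m
      refine Fin.lastCases ?_ (fun m => ?_) m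
      · rw [Fin.snoc_last]; exact h1
      · rw [Fin.snoc_castSucc]; exact hD m
    · rw [Fin.sum_univ_castSucc]
      simp only [Fin.snoc_castSucc, Fin.snoc_last]
      rw [← sub_sub]
      exact h2
    · intro m
      refine Fin.lastCases ?_ (fun m => ?_) m
      · simp only [Fin.snoc_last]
        refine ⟨hxs, h3, le_trans ?_ h4⟩
        apply le_of_eq
        field_simp
        ring
      · simp only [Fin.snoc_castSucc]
        exact hf m
  · right
    push Not at hex
    refine ⟨∑ m, D m, hB, hD1, fun xs hxs => (hex xs hxs).le, ?_⟩
    rw [Matrix.trace_sum, Complex.re_sum]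
    have : ∀ m ∈ (Finset.univ : Finset (Fin k)), (Matrix.trace (D m)).re ≤ L := by
      intro m _
      refine (hf m).2.1.trans ?_
      rw [hcP, tS_trace fun i => hd (f m i)]
      exact hL _ (hf m).1
    refine (Finset.sum_le_sum this).trans ?_
    simp

/-- A partial code can be completed to a code. -/
lemma precode_code {W : X → Mat d} {q : X → Fin d → ℝ} {π : X → Fin d → Mat d} {δ lam : ℝ}
    {A A' : Finset (Fin n → X)} (hA : A' ⊆ A) (x0 : Fin n → X) (k : ℕ) (T : ℝ) (hT : T ≤ k)
    (hk : PreCode W q π δ lam A' k) :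
    ∃ (M' : Type) (_ : Fintype M') (M : Finset M') (f : M' → Fin n → X)
          (D : M' → MatPow d n),
          IsCode W lam M f D ∧
          (∀ m ∈ M, f m ∈ A ∧
            (Matrix.trace (D m)).re ≤ (Matrix.trace (condTypicalProj (f m) q π δ)).re) ∧
          T ≤ (M.card : ℝ) := by
  obtain ⟨f, D, hD, hD1, hf⟩ := hk
  refine ⟨Option (Fin k), inferInstance, Finset.univ.map Function.Embedding.some,
    fun o => o.elim x0 f, fun o => o.elim (1 - ∑ m, D m) D, ⟨?_, ?_, ?_⟩, ?_, ?_⟩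
  · rintro (_ | m)
    · exact hD1
    · exact hD m
  · rw [Fintype.sum_option]
    simp
  · intro m hm
    obtain ⟨m, _, rfl⟩ := Finset.mem_map.1 hm
    exact (hf m).2.2
  · intro m hm
    obtain ⟨m, _, rfl⟩ := Finset.mem_map.1 hm
    exact ⟨hA (hf m).1, (hf m).2.1⟩
  · rw [Finset.card_map]
    simpa using hT

end Greedy

set_option maxHeartbeats 1000000

/-- **Theorem 2 (Code construction).** For `λ, τ ∈ (0,1)` there exist `δ > 0` and a
constant `K(λ,τ,a,d)` such that for every cq-DMC `W`, distribution `P`, blocklength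
`n` and set `A ⊆ X^n` with `P^{⊗n}(A) ≥ τ`, there is an `(n,λ)`-code `(f,D)` with
`f(m) ∈ A`, `Tr D_m ≤ Tr Π^n_{W,δ}(f(m))` for all `m ∈ M`, and
`|M| ≥ exp₂(n I(P;W) − K√n)`. -/
theorem code_construction (a d : ℕ) (lam τ : ℝ)
    (hlam : lam ∈ Set.Ioo (0 : ℝ) 1) (hτ : τ ∈ Set.Ioo (0 : ℝ) 1) :
    ∃ δ : ℝ, 0 < δ ∧ ∃ K : ℝ,
      ∀ (X : Type) [Fintype X], Fintype.card X = a →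
      ∀ (W : X → Mat d), (∀ x, IsState (W x)) →
      ∀ (q : X → Fin d → ℝ) (π : X → Fin d → Mat d),
        (∀ x, IsDiagonalization (W x) (q x) (π x)) →
      ∀ (P : X → ℝ), IsProbDist P →
      ∀ (n : ℕ), 0 < n →
      ∀ (A : Finset (Fin n → X)), τ ≤ prodProb P A →
        ∃ (M' : Type) (_ : Fintype M') (M : Finset M') (f : M' → Fin n → X)
          (D : M' → MatPow d n),
          IsCode W lam M f D ∧
          (∀ m ∈ M, f m ∈ A ∧
            (Matrix.trace (D m)).re ≤ (Matrix.trace (condTypicalProj (f m) q π δ)).re) ∧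
          exp2 ((n : ℝ) * mutualInfo P W - K * Real.sqrt n) ≤ (M.card : ℝ) := by
  obtain ⟨hl0, hl1⟩ := hlam
  obtain ⟨ht0, ht1⟩ := hτ
  set δ : ℝ := √(3 * (a * d + 1) / lam) with hδdef
  have hδ : 0 < δ := Real.sqrt_pos.2 (by positivity)
  set θ : ℝ := lam ^ 2 / 9 * (τ / 2) with hθdef
  have hθ : 0 < θ := by positivity
  have hθ1 : θ ≤ 1 := by
    have : lam ^ 2 ≤ 1 := by nlinarith
    rw [hθdef]
    nlinarith
  have hlogθ : 0 ≤ Real.logb 2 (2 / θ) := by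
    apply Real.logb_nonneg one_lt_two
    rw [le_div_iff₀ hθ]
    linarith
  refine ⟨δ, hδ, √(2 / θ) * √(d * Clog ^ 2) + δ * Clog * (a * d) + √(2 / τ) * (d * Clog) +
    Real.logb 2 (2 / θ), ?_⟩
  intro X _ hX W hW q π hd P hP n hn A hA
  have hq : ∀ x, IsProbDist (q x) := fun x => (hd x).2.2.2.2.2.2
  have hδ' : (Fintype.card X : ℝ) * d * (1 / δ ^ 2) ≤ lam / 3 := by
    rw [hδdef, Real.sq_sqrt (by positivity), hX, one_div_div, mul_div_assoc',
      div_le_div_iff₀ (by positivity) (by norm_num)]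
    nlinarith
  set Hx : X → ℝ := fun x => shannonEntropy (q x) with hHx
  set A' := A.filter (fun xs => |∑ i, Hx (xs i) - n * ∑ x, P x * Hx x| ≤
      √(2 / τ) * √(n * (d * Clog) ^ 2)) with hA'
  have hA'P : τ / 2 ≤ ∑ xs ∈ A', ∏ i, P (xs i) :=
    input_typical hP Hx (fun x => abs_shannon (hq x)) ht0 A hA
  have hcond : condEntropy P W = ∑ x, P x * Hx x := by
    rw [condEntropy]
    exact Finset.sum_congr rfl fun x _ => by rw [vnEntropy_eq (hW x) (hd x)]
  have hρ := avgState_isState hP hW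
  obtain ⟨πρ, hdρ⟩ := exists_diag hρ
  set R := hρ.1.1.eigenvalues with hR
  have hHρ : vnEntropy (avgState P W) = shannonEntropy R := vnEntropy_eq hρ hdρ
  have hM0 : 0 ≤ d * Clog := mul_nonneg (Nat.cast_nonneg _) Clog_pos.le
  have hsn : 1 ≤ √(n : ℝ) := by
    rw [Real.one_le_sqrt]
    exact_mod_cast hn
  set L : ℝ := (2 : ℝ) ^ (n * condEntropy P W + √(2 / τ) * (√n * (d * Clog)) +
    δ * Clog * (a * d) * √n) with hLdef
  have hLpos : 0 < L := Real.rpow_pos_of_pos two_pos _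
  have hL : ∀ xs ∈ A', ((condTypicalSet xs q δ).card : ℝ) ≤ L := by
    intro xs hxs
    refine (condTypical_card xs q hq hδ).trans ?_
    apply Real.rpow_le_rpow_of_exponent_le one_le_two
    rw [hA', Finset.mem_filter, Real.sqrt_mul (Nat.cast_nonneg _), Real.sqrt_sq hM0] at hxs
    have h1 := (abs_le.1 hxs.2).2
    rw [hX, hcond]
    linarith
  set T : ℝ := exp2 ((n : ℝ) * mutualInfo P W - (√(2 / θ) * √(d * Clog ^ 2) +
    δ * Clog * (a * d) + √(2 / τ) * (d * Clog) + Real.logb 2 (2 / θ)) * Real.sqrt n) with hT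
  have hA'ne : A'.Nonempty := by
    rw [Finset.nonempty_iff_ne_empty]
    intro h0
    rw [h0, Finset.sum_empty] at hA'P
    linarith
  obtain ⟨x0, _⟩ := hA'ne
  have key : ∀ k : ℕ, PreCode W q π δ lam A' k ∨
      ∃ k' : ℕ, T ≤ k' ∧ PreCode W q π δ lam A' k' := by
    intro k
    induction k with
    | zero => exact Or.inl (precode_zero W q π δ lam A')
    | succ k ih =>
      rcases ih with hk | hk
      · rcases precode_step hd hl0 hδ hδ' A' L hL k hk with h | ⟨B, hB, hB1, hBA, hBt⟩
        · exact Or.inl h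
        · right
          refine ⟨k, ?_, hk⟩
          have hsh : θ ≤ (Matrix.trace (tensorPow (fun _ => avgState P W) * B)).re := by
            rw [avg_trace]
            have h1 : ∑ xs ∈ A', (∏ i, P (xs i)) * (lam ^ 2 / 9) ≤
                ∑ xs ∈ A', (∏ i, P (xs i)) *
                  (Matrix.trace (tensorPow (fun i => W (xs i)) * B)).re :=
              Finset.sum_le_sum fun xs hxs => mul_le_mul_of_nonneg_left (hBA xs hxs)
                (Finset.prod_nonneg fun i _ => hP.1 _)
            rw [← Finset.sum_mul] at h1
            have h2 : ∑ xs ∈ A', (∏ i, P (xs i)) *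
                  (Matrix.trace (tensorPow (fun i => W (xs i)) * B)).re ≤
                ∑ xs : Fin n → X, (∏ i, P (xs i)) *
                  (Matrix.trace (tensorPow (fun i => W (xs i)) * B)).re :=
              Finset.sum_le_sum_of_subset_of_nonneg (Finset.subset_univ _)
                fun xs _ _ => mul_nonneg (Finset.prod_nonneg fun i _ => hP.1 _)
                  (trace_mul_re_nonneg (tstate fun i => hd (xs i)).1 hB)
            refine le_trans ?_ (h1.trans h2)
            rw [hθdef, mul_comm]
            exact mul_le_mul_of_nonneg_right hA'P (by positivity)
          have h3 := (shadow_lower hdρ hB hB1 hθ hsh).trans hBt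
          have h4 : T * L ≤ θ / 2 * (2 : ℝ) ^ (n * shannonEntropy R -
              √(2 / θ) * √(n * (d * Clog ^ 2))) := by
            have e : θ / 2 = (2 : ℝ) ^ (-Real.logb 2 (2 / θ)) := by
              rw [Real.rpow_neg two_pos.le, Real.rpow_logb two_pos (by norm_num) (by positivity),
                inv_div]
            rw [e, hT, hLdef, exp2, ← Real.rpow_add two_pos, ← Real.rpow_add two_pos]
            apply Real.rpow_le_rpow_of_exponent_le one_le_two
            rw [mutualInfo, hHρ, Real.sqrt_mul (Nat.cast_nonneg n)]
            nlinarith [mul_le_mul_of_nonneg_left hsn hlogθ]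
          exact le_of_mul_le_mul_right (h4.trans h3) hLpos
      · exact Or.inr hk
  have hfin : ∃ k' : ℕ, T ≤ k' ∧ PreCode W q π δ lam A' k' := by
    rcases key ⌈T⌉₊ with h | h
    · exact ⟨_, Nat.le_ceil T, h⟩
    · exact h
  obtain ⟨k, hkT, hk⟩ := hfin
  exact precode_code (Finset.filter_subset _ _) x0 k T hkT hk
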